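/- Let q = qᴿ + qᴵ·i be a Gaussian prime with qᴿ > qᴵ ≥ 1. Every valid difference δ satisfies N(δ) ≤ 2·N(q) − 4·qᴿ + 2; in particular, both components of any distance-valid difference pair satisfy this bound. -/

import Mathlib

open GaussianInt

/-- A Gaussian integer `w` is a valid symbol (representative element of `ℤ[i]/q`) if both of
its coordinates in the rotated basis `(q/|q|, i·q/|q|)` have absolute value less than `|q|/2`,
i.e. `2·|Re(w·q̄)| < N(q)` and `2·|Im(w·q̄)| < N(q)`. -/
def IsValidSymbol (q w : GaussianInt) : Prop :=
  2 * |(w * star q).re| < q.norm ∧ 2 * |(w * star q).im| < q.norm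

/-- A Gaussian integer `δ` is a valid difference if `δ = w − w′` for valid symbols `w, w′`. -/
def IsValidDiff (q δ : GaussianInt) : Prop :=
  ∃ w w' : GaussianInt, IsValidSymbol q w ∧ IsValidSymbol q w' ∧ δ = w - w'

/-- `(δA, δB)` is a distance-valid difference pair if both components are valid differences
and `(δA, δB) ≠ (0, 0)`. -/
def IsDistanceValidPair (q δA δB : GaussianInt) : Prop :=
  IsValidDiff q δA ∧ IsValidDiff q δB ∧ (δA, δB) ≠ (0, 0)

/-!
Division by `q` sends the valid symbols into an open axis-parallel square centred at `0`, so they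
are the Gaussian integers in an open square with vertices `(±1 ± i)·q/2`. That square lies in the
open `ℓ^∞` ball of radius `(|qᴿ| + |qᴵ|)/2` and in the open `ℓ¹` ball of radius
`M = max |qᴿ| |qᴵ|`. By integrality the coordinates of `2w` are weakly majorized by
`(|qᴿ| + |qᴵ| - 1, 2M - |qᴿ| - |qᴵ| - 1)`, and comparing sums of squares gives
`4·N(w) ≤ 2·N(q) - 4·M + 2`. The parallelogram law passes from symbols to differences.
-/

theorem sq_add_sq_le_sq_add_sq_of_le_of_add_le_add {R : Type*} [CommRing R] [LinearOrder R]
    [IsStrictOrderedRing R] {x y s t : R} (hy : 0 ≤ y) (hyx : y ≤ x) (hxs : x ≤ s)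
    (hadd : x + y ≤ s + t) : x ^ 2 + y ^ 2 ≤ s ^ 2 + t ^ 2 := by
  have hdecomp : s ^ 2 + t ^ 2 - (x ^ 2 + y ^ 2) =
      (s - x) ^ 2 + (t - y) ^ 2 + 2 * ((x - y) * (s - x)) + 2 * (y * (s + t - (x + y))) := by
    ring
  have hfirst : 0 ≤ (x - y) * (s - x) := mul_nonneg (sub_nonneg.2 hyx) (sub_nonneg.2 hxs)
  have hsecond : 0 ≤ y * (s + t - (x + y)) := mul_nonneg hy (sub_nonneg.2 hadd)
  rw [← sub_nonneg, hdecomp]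
  linarith [sq_nonneg (s - x), sq_nonneg (t - y)]

theorem abs_add_abs_eq_max_abs_add_abs_sub {G : Type*} [AddCommGroup G] [LinearOrder G]
    [IsOrderedAddMonoid G] (x y : G) : |x| + |y| = max |x + y| |x - y| := by
  refine le_antisymm ?_ (max_le (abs_add_le x y) (abs_sub x y))
  rcases le_total 0 x with hx | hx <;> rcases le_total 0 y with hy | hy
  · exact le_max_of_le_left (by simpa [abs_of_nonneg, hx, hy] using le_abs_self (x + y))
  · exact le_max_of_le_right
      (by simpa [abs_of_nonneg, abs_of_nonpos, hx, hy, sub_eq_add_neg] using le_abs_self (x - y))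
  · exact le_max_of_le_right
      (by simpa [abs_of_nonneg, abs_of_nonpos, hx, hy, sub_eq_add_neg, add_comm] using
        neg_le_abs (x - y))
  · exact le_max_of_le_left
      (by simpa [abs_of_nonpos, hx, hy, add_comm] using neg_le_abs (x + y))

theorem zsqrtd_norm_add_add_norm_sub {d : ℤ} (z w : ℤ√d) :
    (z + w).norm + (z - w).norm = 2 * (z.norm + w.norm) := by
  simp only [Zsqrtd.norm_def, Zsqrtd.re_add, Zsqrtd.im_add, Zsqrtd.re_sub, Zsqrtd.im_sub]
  ring

theorem zsqrtd_norm_sub_le {d : ℤ} (hd : d ≤ 0) (z w : ℤ√d) :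
    (z - w).norm ≤ 2 * (z.norm + w.norm) := by
  linarith [zsqrtd_norm_add_add_norm_sub z w, Zsqrtd.norm_nonneg hd (z + w)]

namespace IsValidSymbol

variable {q w : GaussianInt}

theorem norm_pos (hw : IsValidSymbol q w) : 0 < q.norm :=
  lt_of_le_of_lt (by positivity) hw.1

theorem ne_zero (hw : IsValidSymbol q w) : q ≠ 0 := by
  rintro rfl
  simpa using hw.norm_pos

/-- The right-hand side is twice the support function of the square of valid symbols at `conj c`. -/
theorem two_mul_abs_re_mul_lt (hw : IsValidSymbol q w) {c : GaussianInt} (hc : c ≠ 0) :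
    2 * |(c * w).re| < |(c * q).re| + |(c * q).im| := by
  have hN := hw.norm_pos
  have hcoord : q.norm * (c * w).re =
      (c * q).re * (w * star q).re - (c * q).im * (w * star q).im := by
    simp only [Zsqrtd.norm_def, Zsqrtd.re_mul, Zsqrtd.im_mul, Zsqrtd.re_star, Zsqrtd.im_star]
    ring
  have hpos : 0 < |(c * q).re| + |(c * q).im| := by
    rcases not_and_or.1 (mt Zsqrtd.ext_iff.2 (mul_ne_zero hc hw.ne_zero)) with h | h
    · exact add_pos_of_pos_of_nonneg (abs_pos.2 h) (abs_nonneg _)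
    · exact add_pos_of_nonneg_of_pos (abs_nonneg _) (abs_pos.2 h)
  obtain ⟨hre, him⟩ := hw
  refine lt_of_mul_lt_mul_left ?_ hN.le
  calc q.norm * (2 * |(c * w).re|)
      = 2 * |(c * q).re * (w * star q).re - (c * q).im * (w * star q).im| := by
        rw [← hcoord, abs_mul, abs_of_pos hN]; ring
    _ ≤ |(c * q).re| * (2 * |(w * star q).re|) + |(c * q).im| * (2 * |(w * star q).im|) := by
        have htri := abs_sub ((c * q).re * (w * star q).re) ((c * q).im * (w * star q).im)
        rw [abs_mul, abs_mul] at htri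
        linarith
    _ ≤ |(c * q).re| * (q.norm - 1) + |(c * q).im| * (q.norm - 1) := by
        gcongr <;> omega
    _ < q.norm * (|(c * q).re| + |(c * q).im|) := by linarith

theorem two_mul_abs_re_lt (hw : IsValidSymbol q w) : 2 * |w.re| < |q.re| + |q.im| := by
  simpa using hw.two_mul_abs_re_mul_lt one_ne_zero

theorem two_mul_abs_im_lt (hw : IsValidSymbol q w) : 2 * |w.im| < |q.re| + |q.im| := by
  simpa [add_comm] using hw.two_mul_abs_re_mul_lt (c := ⟨0, 1⟩) (by simp [Zsqrtd.ext_iff])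

theorem abs_re_add_abs_im_lt (hw : IsValidSymbol q w) :
    |w.re| + |w.im| < max |q.re| |q.im| := by
  have hmax : |q.re + q.im| + |q.re - q.im| = 2 * max |q.re| |q.im| := by
    rw [abs_add_abs_eq_max_abs_add_abs_sub, add_add_sub_cancel, add_sub_sub_cancel,
      ← two_mul, ← two_mul, abs_mul, abs_mul, abs_two, mul_max_of_nonneg _ _ zero_le_two]
  have hadd : 2 * |w.re + w.im| < |q.re + q.im| + |q.re - q.im| := by
    simpa [← sub_eq_add_neg, abs_sub_comm q.im] using
      hw.two_mul_abs_re_mul_lt (c := ⟨1, -1⟩) (by simp [Zsqrtd.ext_iff])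
  have hsub : 2 * |w.re - w.im| < |q.re + q.im| + |q.re - q.im| := by
    simpa [← sub_eq_add_neg, add_comm] using
      hw.two_mul_abs_re_mul_lt (c := ⟨1, 1⟩) (by simp [Zsqrtd.ext_iff])
  rw [abs_add_abs_eq_max_abs_add_abs_sub, max_lt_iff]
  constructor <;> linarith

theorem four_mul_norm_le (hw : IsValidSymbol q w) :
    4 * w.norm ≤ 2 * q.norm - 4 * max |q.re| |q.im| + 2 := by
  set M := max |q.re| |q.im| with hM
  have hmax : 2 * max |w.re| |w.im| ≤ |q.re| + |q.im| - 1 := by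
    have hre := hw.two_mul_abs_re_lt
    have him := hw.two_mul_abs_im_lt
    omega
  have hadd : max |w.re| |w.im| + min |w.re| |w.im| ≤ M - 1 := by
    rw [max_add_min]
    exact Int.le_sub_one_of_lt hw.abs_re_add_abs_im_lt
  have hsq := sq_add_sq_le_sq_add_sq_of_le_of_add_le_add (s := |q.re| + |q.im| - 1)
    (t := 2 * M - |q.re| - |q.im| - 1) (y := 2 * min |w.re| |w.im|) (by positivity)
    (by gcongr; exact min_le_max) hmax (by linarith)
  have hwsq : max |w.re| |w.im| ^ 2 + min |w.re| |w.im| ^ 2 = w.re ^ 2 + w.im ^ 2 := by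
    rcases le_total |w.re| |w.im| with h | h <;> simp [h, add_comm]
  have hqsq : M ^ 2 + (|q.re| + |q.im| - M) ^ 2 = q.re ^ 2 + q.im ^ 2 := by
    rcases le_total |q.re| |q.im| with h | h <;> simp [hM, h, add_comm]
  simp only [Zsqrtd.norm_def]
  linarith

end IsValidSymbol

theorem stmt3_general {q δ : GaussianInt} (hδ : IsValidDiff q δ) :
    δ.norm ≤ 2 * q.norm - 4 * max |q.re| |q.im| + 2 := by
  obtain ⟨w, w', hw, hw', rfl⟩ := hδ
  linarith [zsqrtd_norm_sub_le (by norm_num) w w', hw.four_mul_norm_le, hw'.four_mul_norm_le]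

/-- Let `q = qᴿ + qᴵ·i` be a Gaussian prime with `qᴿ > qᴵ ≥ 1`. Every valid
difference `δ` satisfies `N(δ) ≤ 2·N(q) − 4·qᴿ + 2`; in particular both components of any
distance-valid difference pair satisfy this bound. -/
theorem stmt3 (q : GaussianInt) (hq : Prime q) (h1 : 1 ≤ q.im) (h2 : q.im < q.re) :
    (∀ δ : GaussianInt, IsValidDiff q δ → δ.norm ≤ 2 * q.norm - 4 * q.re + 2) ∧
    (∀ δA δB : GaussianInt, IsDistanceValidPair q δA δB →
      δA.norm ≤ 2 * q.norm - 4 * q.re + 2 ∧ δB.norm ≤ 2 * q.norm - 4 * q.re + 2) := by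
  have bound (δ : GaussianInt) (hδ : IsValidDiff q δ) : δ.norm ≤ 2 * q.norm - 4 * q.re + 2 := by
    linarith [stmt3_general hδ, le_max_left |q.re| |q.im|, le_abs_self q.re]
  exact ⟨bound, fun δA δB h => ⟨bound δA h.1, bound δB h.2.1⟩⟩
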